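/- Let R be a commutative ring, M a pseudo-absorbing primary multiplication R-module, and N a submodule of M. Then M/N is a pseudo-absorbing primary multiplication R-module. -/

import Mathlib

/-- A proper ideal `I` is 2-absorbing primary if `a*b*c ∈ I` implies
`a*b ∈ I` or `a*c ∈ √I` or `b*c ∈ √I`. -/
def IsTwoAbsPrimary {R : Type*} [CommRing R] (I : Ideal R) : Prop :=
  I ≠ ⊤ ∧ ∀ a b c : R, a * b * c ∈ I → a * b ∈ I ∨ a * c ∈ I.radical ∨ b * c ∈ I.radical

/-- A proper submodule `N` of `M` is pseudo-absorbing primary if `(N :_R M)`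
is a 2-absorbing primary ideal of `R`. -/
def IsPseudoAbsPrimary {R M : Type*} [CommRing R] [AddCommGroup M] [Module R M]
    (N : Submodule R M) : Prop :=
  N ≠ ⊤ ∧ IsTwoAbsPrimary (N.colon ⊤)

/-- `M` is a pseudo-absorbing primary multiplication module if every
pseudo-absorbing primary submodule `N` satisfies `N = I • M` for some ideal `I`. -/
def IsPAPMultiplication (R M : Type*) [CommRing R] [AddCommGroup M] [Module R M] : Prop :=
  ∀ N : Submodule R M, IsPseudoAbsPrimary N → ∃ I : Ideal R, N = I • (⊤ : Submodule R M)

/-- Quotients of pseudo-absorbing primary multiplication modules are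
pseudo-absorbing primary multiplication. -/
theorem stmt_19 {R M : Type*} [CommRing R] [AddCommGroup M] [Module R M]
    (hM : IsPAPMultiplication R M) (N : Submodule R M) :
    IsPAPMultiplication R (M ⧸ N) := by
  intro K hK
  have hsurj : Function.Surjective N.mkQ := N.mkQ_surjective
  have hcolon : (K.comap N.mkQ).colon ⊤ = K.colon ⊤ := by
    ext r
    rw [Submodule.mem_colon, Submodule.mem_colon]
    constructor
    · intro h y _
      obtain ⟨x, rfl⟩ := hsurj y
      have hx := h x trivial
      rwa [Submodule.mem_comap, map_smul] at hx
    · intro h x _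
      rw [Submodule.mem_comap, map_smul]
      exact h _ trivial
  have hP : IsPseudoAbsPrimary (K.comap N.mkQ) := by
    refine ⟨fun h => hK.1 ?_, ?_⟩
    · rw [← Submodule.map_comap_eq_of_surjective hsurj K, h, Submodule.map_top,
        LinearMap.range_eq_top.2 hsurj]
    · rw [hcolon]
      exact hK.2
  obtain ⟨I, hI⟩ := hM _ hP
  refine ⟨I, ?_⟩
  rw [← Submodule.map_comap_eq_of_surjective hsurj K, hI, Submodule.map_smul'',
    Submodule.map_top, LinearMap.range_eq_top.2 hsurj]
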